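/- arXiv:2306.09543 — 3 statements merged into one kernel-verified Lean document; each statement's English description precedes it below -/
import Mathlib

section
/- Consider the set of pairs (σ₀, σ₁) of permutations of Fin 16 such that the subgroup generated by σ₀ and σ₁ acts transitively, the cycle type of σ₀ consists of 8 copies of 2 (eight disjoint transpositions), the cycle type of σ₁ consists of 4 copies of 4 (four disjoint 4-cycles), and the cycle type of σ₁σ₀ is {8, 8} (two disjoint 8-cycles). Declare two such pairs equivalent if they are simultaneously conjugate by a permutation of Fin 16. Then there are exactly 19 equivalence classes, and exactly 4 of them additionally satisfy that the cycle type of σ₁²σ₀ is {8, 8}. -/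
/-- The monodromy pairs of uniform dessins of type (2,4,8) and genus 2:
transitive pairs on 16 points with eight transpositions, four 4-cycles and
two 8-cycle faces. -/
def IsType248Genus2Pair (p : Equiv.Perm (Fin 16) × Equiv.Perm (Fin 16)) : Prop :=
  (∀ x y : Fin 16,
    ∃ π ∈ Subgroup.closure ({p.1, p.2} : Set (Equiv.Perm (Fin 16))), π x = y) ∧
  p.1.cycleType = Multiset.replicate 8 2 ∧
  p.2.cycleType = Multiset.replicate 4 4 ∧
  (p.2 * p.1).cycleType = {8, 8}

/-- Those pairs whose uniform multicurve is a single (proper) filling curve: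
σ₁²σ₀ splits as two disjoint cycles of equal length 8. -/
def IsType248Genus2CurvePair
    (p : Equiv.Perm (Fin 16) × Equiv.Perm (Fin 16)) : Prop :=
  IsType248Genus2Pair p ∧ (p.2 ^ 2 * p.1).cycleType = {8, 8}

/-- Simultaneous conjugacy of monodromy pairs. -/
def SimConj248 (p q : {p // IsType248Genus2Pair p}) : Prop :=
  ∃ π : Equiv.Perm (Fin 16),
    q.1.1 = π * p.1.1 * π⁻¹ ∧ q.1.2 = π * p.1.2 * π⁻¹

/-- Simultaneous conjugacy of monodromy pairs of single filling curves. -/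
def SimConj248Curve (p q : {p // IsType248Genus2CurvePair p}) : Prop :=
  ∃ π : Equiv.Perm (Fin 16),
    q.1.1 = π * p.1.1 * π⁻¹ ∧ q.1.2 = π * p.1.2 * π⁻¹


namespace D248

/-- The standard face permutation `(0 … 7)(8 … 15)` on natural numbers. -/
def phi (x : ℕ) : ℕ := bif Nat.beq x 7 then 0 else bif Nat.beq x 15 then 8 else Nat.succ x

/-- The numbers below 16. -/
def l16 : List ℕ := [0, 1, 2, 3, 4, 5, 6, 7, 8, 9, 10, 11, 12, 13, 14, 15]

/-- Elements of the centralizer of `phi`. -/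
def cenN (sw : Bool) (a b z : ℕ) : ℕ :=
  bif sw then (bif Nat.blt z 8 then 8 + (z + a) % 8 else (z + b) % 8)
  else (bif Nat.blt z 8 then (z + a) % 8 else 8 + (z + b) % 8)

/-- The nineteen involutions, written in base 16. -/
def repNums : List ℕ :=
  [8984291689986659640,
   15777409874720986680,
   8961761597233437240,
   15489166304631069240,
   8948254096883064120,
   15200940326458760760,
   15200904731382521400,
   3938817615889298760,
   13346406366422619720,
   14316764201957300040,
   13126292794981317960,
   11706613897926655560,
   4221138185559537240,
   12868181409492926040,
   12859173525727780440,
   3914879392338999960,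
   7221281281645927320,
   6012978476065942680,
   5941398207496756920]

/-- Evaluate an involution written in base 16. -/
def digit (r z : ℕ) : ℕ := (r / 16 ^ z) % 16

/-- A partial involution (16 means undefined) has no contradiction at `x`. -/
def ok1 (p : ℕ → ℕ) (x : ℕ) : Bool :=
  bif Nat.beq (p x) 16 then true else
  bif Nat.beq (p (phi (p x))) 16 then true else
  bif Nat.beq (phi (p (phi (p x)))) x then false else
  bif Nat.beq (p (phi (p (phi (p x))))) 16 then true else
  bif Nat.beq (p (phi (p (phi (p (phi (p x))))))) 16 then true else
  Nat.beq (phi (p (phi (p (phi (p (phi (p x)))))))) x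

/-- Add an edge to a partial involution. -/
def upd (p : ℕ → ℕ) (x y z : ℕ) : ℕ :=
  bif Nat.beq z x then y else bif Nat.beq z y then x else p z

/-- A complete involution is conjugate to one in the list. -/
def leaf (p : ℕ → ℕ) : Bool :=
  l16.all (fun z => !(Nat.beq (p z) 16)) &&
  [false, true].any fun sw => [0, 1, 2, 3, 4, 5, 6, 7].any fun a =>
    [0, 1, 2, 3, 4, 5, 6, 7].any fun b =>
      Nat.beq (cenN sw a b (p (bif sw then 8 + (8 - b) % 8 else (8 - a) % 8))) 8 &&
      repNums.any fun r => l16.all fun z =>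
        Nat.beq (cenN sw a b (p z)) (digit r (cenN sw a b z))

/-- The branching point: an undefined point that ends a chain as early as possible in the list. -/
def first (p : ℕ → ℕ) : List ℕ → ℕ
  | [] => 0
  | x :: l =>
    bif Nat.beq (p x) 16 then x else
    bif Nat.beq (p (phi (p x))) 16 then phi (p x) else
    bif Nat.beq (p (phi (p (phi (p x))))) 16 then phi (p (phi (p x))) else
    bif Nat.beq (p (phi (p (phi (p (phi (p x))))))) 16 then phi (p (phi (p (phi (p x))))) else
    first p l

/-- Try all partners of `x`. -/
def tryAll (p : ℕ → ℕ) (k : (ℕ → ℕ) → Bool) (x : ℕ) : List ℕ → Bool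
  | [] => true
  | y :: l =>
    (bif Nat.beq (p y) 16 then
      bif Nat.beq y x then true else
        bif l16.all (ok1 (upd p x y)) then k (upd p x y) else true
      else true) && tryAll p k x l

/-- Backtracking search, branching at the point given by `first`. -/
def search : ℕ → (ℕ → ℕ) → Bool
  | 0, p => leaf p
  | n + 1, p =>
    l16.any fun x => Nat.beq x (first p l16) && (Nat.beq (p x) 16 && tryAll p (search n) x l16)

/-- The initial partial involution. -/
def p0 : ℕ → ℕ := upd (fun _ => 16) 0 8

theorem search_ok : search 7 p0 = true := by decide +kernel

/-- The conditions on a normalized involution, as a function on natural numbers. -/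
def Valid (f : ℕ → ℕ) : Prop :=
  ∀ z < 16, f z < 16 ∧ f (f z) = z ∧ f z ≠ z ∧ phi (f (phi (f z))) ≠ z ∧
    phi (f (phi (f (phi (f (phi (f z))))))) = z

/-- `f` extends the partial involution `p`. -/
def Ext (f p : ℕ → ℕ) : Prop :=
  ∀ z < 16, (p z = 16 ∧ p (f z) = 16) ∨ (p z = f z ∧ p (f z) = z)

theorem mem_l16 (z : ℕ) : z ∈ l16 ↔ z < 16 := by
  constructor
  · intro h; simp [l16] at h; omega
  · intro h; interval_cases z <;> simp [l16]

theorem phi_lt {z : ℕ} (h : z < 16) : phi z < 16 := by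
  interval_cases z <;> decide

theorem Ext.eq {f p : ℕ → ℕ} (h : Ext f p) {z : ℕ} (hz : z < 16) (hp : ¬ p z = 16) :
    p z = f z := by
  rcases h z hz with h | h
  · exact absurd h.1 hp
  · exact h.1

theorem beq_false {a b : ℕ} (h : ¬ a = b) : Nat.beq a b = false := by
  cases hh : Nat.beq a b
  · rfl
  · exact absurd (Nat.eq_of_beq_eq_true hh) h

theorem beq_true {a b : ℕ} (h : a = b) : Nat.beq a b = true := by
  subst h; exact Nat.beq_refl a

theorem ok1_of_ext {f p : ℕ → ℕ} (hf : Valid f) (h : Ext f p) {x : ℕ} (hx : x < 16) :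
    ok1 p x = true := by
  have hl : ∀ {z}, z < 16 → phi (f z) < 16 := fun hz => phi_lt (hf _ hz).1
  obtain ⟨-, -, -, h2, h4⟩ := hf x hx
  unfold ok1
  by_cases e1 : p x = 16
  · rw [beq_true e1]; rfl
  rw [beq_false e1, h.eq hx e1]
  by_cases e2 : p (phi (f x)) = 16
  · rw [beq_true e2]; rfl
  rw [beq_false e2, h.eq (hl hx) e2, beq_false h2]
  by_cases e3 : p (phi (f (phi (f x)))) = 16
  · rw [beq_true e3]; rfl
  rw [beq_false e3, h.eq (hl (hl hx)) e3]
  by_cases e4 : p (phi (f (phi (f (phi (f x)))))) = 16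
  · rw [beq_true e4]; rfl
  rw [beq_false e4, h.eq (hl (hl (hl hx))) e4, beq_true h4]
  rfl

theorem ext_upd {f p : ℕ → ℕ} (hf : Valid f) (h : Ext f p) {x : ℕ} (hx : x < 16) :
    Ext f (upd p x (f x)) := by
  have key : ∀ z, upd p x (f x) z = if z = x then f x else if z = f x then x else p z := by
    intro z
    unfold upd
    by_cases e1 : z = x
    · rw [beq_true e1, if_pos e1]; rfl
    rw [beq_false e1, if_neg e1]
    by_cases e2 : z = f x
    · rw [beq_true e2, if_pos e2]; rfl
    rw [beq_false e2, if_neg e2]; rfl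
  intro z hz
  obtain ⟨hx1, hx2, hx3, -, -⟩ := hf x hx
  obtain ⟨hz1, hz2, hz3, -, -⟩ := hf z hz
  rw [key, key]
  by_cases e1 : z = x
  · subst e1; simp [hx3]
  by_cases e2 : z = f x
  · subst e2; simp [hx2, hx3]
  have e3 : ¬ f z = x := fun e => e2 (by rw [← e, hz2])
  have e4 : ¬ f z = f x := fun e => e1 (by rw [← hz2, e, hx2])
  simp only [e1, e2, e3, e4, if_false]
  exact h z hz

/-- The conclusion of the search. -/
def Good (f : ℕ → ℕ) : Prop :=
  ∃ sw : Bool, ∃ a < 8, ∃ b < 8, ∃ r ∈ repNums, ∀ z < 16,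
    cenN sw a b (f z) = digit r (cenN sw a b z)

theorem leaf_good {f p : ℕ → ℕ} (h : Ext f p) (hl : leaf p = true) : Good f := by
  unfold leaf at hl
  rw [Bool.and_eq_true, List.all_eq_true] at hl
  obtain ⟨h1, h2⟩ := hl
  have hp : ∀ z < 16, p z = f z := by
    intro z hz
    apply h.eq hz
    intro e
    have := h1 z ((mem_l16 z).2 hz)
    rw [beq_true e] at this
    exact absurd this (by decide)
  obtain ⟨sw, -, h2⟩ := List.any_eq_true.1 h2
  obtain ⟨a, ha, h2⟩ := List.any_eq_true.1 h2
  obtain ⟨b, hb, h2⟩ := List.any_eq_true.1 h2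
  rw [Bool.and_eq_true] at h2
  obtain ⟨r, hr, h2⟩ := List.any_eq_true.1 h2.2
  rw [List.all_eq_true] at h2
  refine ⟨sw, a, ?_, b, ?_, r, hr, fun z hz => ?_⟩
  · simp at ha; omega
  · simp at hb; omega
  · rw [← hp z hz]
    exact Nat.eq_of_beq_eq_true (h2 z ((mem_l16 z).2 hz))

theorem tryAll_spec {f p : ℕ → ℕ} (hf : Valid f) (h : Ext f p) (k : (ℕ → ℕ) → Bool)
    {x : ℕ} (hx : x < 16) (hp : p x = 16) (l : List ℕ) (hl : f x ∈ l)
    (ht : tryAll p k x l = true) : k (upd p x (f x)) = true := by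
  induction l with
  | nil => simp at hl
  | cons y l ih =>
    rw [tryAll, Bool.and_eq_true] at ht
    rcases List.mem_cons.1 hl with e | e
    · have h1 := ht.1
      have hy : p y = 16 := by
        rcases h x hx with h' | h'
        · rw [← e]; exact h'.2
        · rw [hp] at h'; have := (hf x hx).1; omega
      have hyx : ¬ y = x := by rw [← e]; exact (hf x hx).2.2.1
      have hall : l16.all (ok1 (upd p x y)) = true := by
        rw [List.all_eq_true]
        intro z hz
        rw [← e]
        exact ok1_of_ext hf (ext_upd hf h hx) ((mem_l16 z).1 hz)
      rw [beq_true hy, beq_false hyx, hall] at h1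
      rw [e]; exact h1
    · exact ih e ht.2

theorem search_good (n : ℕ) {f p : ℕ → ℕ} (hf : Valid f) (h : Ext f p)
    (hs : search n p = true) : Good f := by
  induction n generalizing p with
  | zero => exact leaf_good h hs
  | succ n ih =>
    rw [search] at hs
    obtain ⟨x, hx, hs⟩ := List.any_eq_true.1 hs
    rw [Bool.and_eq_true, Bool.and_eq_true] at hs
    have hx' := (mem_l16 x).1 hx
    exact ih (ext_upd hf h hx')
      (tryAll_spec hf h _ hx' (Nat.eq_of_beq_eq_true hs.2.1) l16
        ((mem_l16 _).2 (hf x hx').1) hs.2.2)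

theorem valid_good {f : ℕ → ℕ} (hf : Valid f) (h0 : f 0 = 8) : Good f := by
  refine search_good 7 hf ?_ search_ok
  have : Ext f (fun _ => 16) := fun z _ => Or.inl ⟨rfl, rfl⟩
  have := ext_upd hf this (x := 0) (by norm_num)
  rw [h0] at this
  exact this

/-! ### Cycle types -/

open Equiv Equiv.Perm

theorem cycleType_iff (σ : Perm (Fin 16)) (k m : ℕ) (hkm : m * 2 ^ (k + 1) = 16) :
    σ.cycleType = Multiset.replicate m (2 ^ (k + 1)) ↔
      σ ^ (2 ^ (k + 1)) = 1 ∧ ∀ x, (σ ^ (2 ^ k)) x ≠ x := by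
  constructor
  · intro h
    have h1 : σ ^ (2 ^ (k + 1)) = 1 := by
      rw [← orderOf_dvd_iff_pow_eq_one, ← lcm_cycleType, Multiset.lcm_dvd]
      intro b hb
      rw [h] at hb
      rw [Multiset.eq_of_mem_replicate hb]
    refine ⟨h1, fun x hx => ?_⟩
    have hs : σ.support.card = 16 := by
      rw [← sum_cycleType, h, Multiset.sum_replicate, smul_eq_mul, hkm]
    have hu : σ.support = Finset.univ := by
      rw [← Finset.card_eq_iff_eq_univ, hs]; rfl
    have hxs : x ∈ σ.support := by rw [hu]; exact Finset.mem_univ _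
    have hc := cycleOf_mem_cycleFactorsFinset_iff.2 hxs
    have hm : (σ.cycleOf x).support.card ∈ σ.cycleType := by
      rw [cycleType_def]
      exact Multiset.mem_map_of_mem _ hc
    rw [h] at hm
    have hm := Multiset.eq_of_mem_replicate hm
    have hcyc := isCycle_cycleOf σ (mem_support.1 hxs)
    have hone : σ.cycleOf x ^ 2 ^ k = 1 := by
      rw [hcyc.pow_eq_one_iff]
      exact ⟨x, by rw [cycleOf_apply_self]; exact mem_support.1 hxs,
        by rw [cycleOf_pow_apply_self]; exact hx⟩
    have hd := orderOf_dvd_of_pow_eq_one hone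
    rw [hcyc.orderOf, hm, Nat.pow_dvd_pow_iff_le_right (by norm_num)] at hd
    omega
  · rintro ⟨h1, h2⟩
    have hall : ∀ b ∈ σ.cycleType, b = 2 ^ (k + 1) := by
      intro b hb
      have hd : b ∣ 2 ^ (k + 1) :=
        (dvd_of_mem_cycleType hb).trans (orderOf_dvd_of_pow_eq_one h1)
      obtain ⟨j, hj, rfl⟩ := (Nat.dvd_prime_pow Nat.prime_two).1 hd
      rcases Nat.lt_or_ge j (k + 1) with hlt | hge
      · exfalso
        rw [cycleType_def] at hb
        obtain ⟨c, hc, hcard⟩ := Multiset.mem_map.1 hb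
        replace hc : c ∈ σ.cycleFactorsFinset := hc
        have hcyc := (mem_cycleFactorsFinset_iff.1 hc).1
        obtain ⟨x, hx, -⟩ := hcyc
        have hcx := cycle_is_cycleOf (mem_support.2 hx) hc
        have hcyc := (mem_cycleFactorsFinset_iff.1 hc).1
        have hord : orderOf c = 2 ^ j := by rw [hcyc.orderOf]; exact hcard
        have hone : c ^ 2 ^ k = 1 := by
          rw [← orderOf_dvd_iff_pow_eq_one, hord]
          exact Nat.pow_dvd_pow 2 (by omega)
        apply h2 x
        rw [← cycleOf_pow_apply_self, ← hcx, hone]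
        rfl
      · rw [le_antisymm hj hge]
    have hu : σ.support = Finset.univ := by
      ext x
      simp only [mem_support, Finset.mem_univ, iff_true]
      intro hx
      exact h2 x (pow_apply_eq_self_of_apply_eq_self hx _)
    have hrep := Multiset.eq_replicate_card.2 hall
    have hsum := sum_cycleType σ
    rw [hu, hrep, Multiset.sum_replicate, smul_eq_mul, Finset.card_univ, Fintype.card_fin]
      at hsum
    rw [hrep, Nat.eq_of_mul_eq_mul_right (by positivity) (hsum.trans hkm.symm)]

/-! ### Passing to permutations of `Fin 16` -/

/-- The standard face permutation. -/
def phiP : Perm (Fin 16) where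
  toFun x := Fin.ofNat 16 (phi x.val)
  invFun x := Fin.ofNat 16 (phi (phi (phi (phi (phi (phi (phi x.val)))))))
  left_inv := by decide +kernel
  right_inv := by decide +kernel

theorem phiP_val (x : Fin 16) : (phiP x).val = phi x.val := by
  revert x; decide +kernel

theorem cen_lt : ∀ (sw : Bool) (a b : Fin 8) (x : Fin 16), cenN sw a b x < 16 := by
  decide +kernel

theorem cen_inj : ∀ (sw : Bool) (a b : Fin 8) (x y : Fin 16),
    cenN sw a b x = cenN sw a b y → x = y := by
  decide +kernel

theorem cen_comm : ∀ (sw : Bool) (a b : Fin 8) (x : Fin 16),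
    cenN sw a b (phi x) = phi (cenN sw a b x) := by
  decide +kernel

/-- The centralizer elements as permutations. -/
noncomputable def cenP (sw : Bool) (a b : Fin 8) : Perm (Fin 16) :=
  Equiv.ofBijective (fun x => (⟨cenN sw a b x, cen_lt sw a b x⟩ : Fin 16))
    (Finite.injective_iff_bijective.1 fun x y h =>
      cen_inj sw a b x y (congrArg Fin.val h))

theorem cenP_val (sw : Bool) (a b : Fin 8) (x : Fin 16) :
    (cenP sw a b x).val = cenN sw a b x := rfl

theorem cenP_comm (sw : Bool) (a b : Fin 8) : cenP sw a b * phiP = phiP * cenP sw a b := by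
  ext x
  rw [mul_apply, mul_apply, cenP_val, phiP_val, phiP_val, cenP_val, cen_comm]

theorem rep_invol : ∀ (i : Fin 19) (x : Fin 16),
    Fin.ofNat 16 (digit (repNums.getD i 0) (Fin.ofNat 16 (digit (repNums.getD i 0) x)).val) = x := by
  decide +kernel

/-- The nineteen involutions as permutations. -/
def repP (i : Fin 19) : Perm (Fin 16) where
  toFun x := Fin.ofNat 16 (digit (repNums.getD i 0) x)
  invFun x := Fin.ofNat 16 (digit (repNums.getD i 0) x)
  left_inv := rep_invol i
  right_inv := rep_invol i

/-- The nineteen representatives. -/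
def rep (i : Fin 19) : Perm (Fin 16) × Perm (Fin 16) := (repP i, phiP * repP i)

theorem repP_sq (i : Fin 19) : repP i * repP i = 1 := by
  ext x : 1
  exact rep_invol i x

theorem rep_mul (i : Fin 19) : (rep i).2 * (rep i).1 = phiP := by
  rw [rep, mul_assoc, repP_sq, mul_one]

theorem cyc2 (σ : Perm (Fin 16)) : σ.cycleType = Multiset.replicate 8 2 ↔
    σ ^ 2 = 1 ∧ ∀ x, σ x ≠ x := by
  simpa using cycleType_iff σ 0 8 (by norm_num)

theorem cyc4 (σ : Perm (Fin 16)) : σ.cycleType = Multiset.replicate 4 4 ↔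
    σ ^ 4 = 1 ∧ ∀ x, (σ ^ 2) x ≠ x := by
  simpa using cycleType_iff σ 1 4 (by norm_num)

theorem cyc8 (σ : Perm (Fin 16)) : σ.cycleType = {8, 8} ↔
    σ ^ 8 = 1 ∧ ∀ x, (σ ^ 4) x ≠ x := by
  simpa using cycleType_iff σ 2 2 (by norm_num)

theorem phiP_cyc : phiP.cycleType = {8, 8} := by
  rw [cyc8, Perm.ext_iff]
  decide +kernel

theorem repP_cyc (i : Fin 19) : (repP i).cycleType = Multiset.replicate 8 2 := by
  rw [cyc2, Perm.ext_iff]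
  revert i
  decide +kernel

theorem repQ_cyc (i : Fin 19) : (phiP * repP i).cycleType = Multiset.replicate 4 4 := by
  rw [cyc4, Perm.ext_iff]
  revert i
  decide +kernel

theorem rep_reach : ∀ (i : Fin 19) (x : Fin 16),
    (∃ k : Fin 8, (phiP ^ k.val) 0 = x) ∨ (∃ k : Fin 8, (phiP ^ k.val * repP i) 0 = x) := by
  decide +kernel

theorem rep_trans (i : Fin 19) (x y : Fin 16) :
    ∃ π ∈ Subgroup.closure ({(rep i).1, (rep i).2} : Set (Perm (Fin 16))), π x = y := by
  set H := Subgroup.closure ({(rep i).1, (rep i).2} : Set (Perm (Fin 16))) with hH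
  have h1 : repP i ∈ H := Subgroup.subset_closure (Or.inl rfl)
  have h2 : (rep i).2 ∈ H := Subgroup.subset_closure (Or.inr rfl)
  have h3 : phiP ∈ H := by rw [← rep_mul i]; exact mul_mem h2 h1
  have key : ∀ z : Fin 16, ∃ π ∈ H, π 0 = z := by
    intro z
    rcases rep_reach i z with ⟨k, hk⟩ | ⟨k, hk⟩
    · exact ⟨_, pow_mem h3 _, hk⟩
    · exact ⟨_, mul_mem (pow_mem h3 _) h1, hk⟩
  obtain ⟨g, hg, hgx⟩ := key x
  obtain ⟨g', hg', hgy⟩ := key y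
  refine ⟨g' * g⁻¹, mul_mem hg' (inv_mem hg), ?_⟩
  rw [mul_apply, ← hgx, ← hgy]
  simp

theorem rep_isPair (i : Fin 19) : IsType248Genus2Pair (rep i) :=
  ⟨rep_trans i, repP_cyc i, repQ_cyc i, by rw [rep_mul]; exact phiP_cyc⟩

/-- Number of fixed points. -/
def nfix (σ : Perm (Fin 16)) : ℕ := (Finset.univ.filter fun x => σ x = x).card

theorem nfix_conj (π σ : Perm (Fin 16)) : nfix (π * σ * π⁻¹) = nfix σ := by
  symm
  unfold nfix
  refine Finset.card_bij (fun x _ => π x) ?_ ?_ ?_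
  · intro x hx
    simp only [Finset.mem_filter, Finset.mem_univ, true_and] at hx ⊢
    simp [hx]
  · intro x _ y _ h
    exact π.injective h
  · intro y hy
    simp only [Finset.mem_filter, Finset.mem_univ, true_and] at hy
    refine ⟨π⁻¹ y, ?_, by simp⟩
    simp only [Finset.mem_filter, Finset.mem_univ, true_and]
    rw [mul_apply, mul_apply] at hy
    conv_rhs => rw [← hy]
    simp

/-- Fixed point counts of seven words in `s` and `f = σ₁σ₀`. -/
def inv7 (p : Perm (Fin 16) × Perm (Fin 16)) : List ℕ :=
  let s := p.1
  let f := p.2 * p.1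
  [nfix (s * f ^ 2), nfix (s * f ^ 3), nfix (s * f ^ 4), nfix (s * f * s * f ^ 3),
    nfix (s * f ^ 2 * s * f ^ 2), nfix (s * f ^ 2 * s * f ^ 3),
    nfix (s * f * s * f ^ 2 * s * f ^ 4)]

theorem inv7_conj (p : Perm (Fin 16) × Perm (Fin 16)) (π : Perm (Fin 16)) :
    inv7 (π * p.1 * π⁻¹, π * p.2 * π⁻¹) = inv7 p := by
  have h : ∀ σ : Perm (Fin 16), π * σ * π⁻¹ = MulAut.conj π σ := fun σ => rfl
  have hn : ∀ σ : Perm (Fin 16), nfix (MulAut.conj π σ) = nfix σ := nfix_conj π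
  unfold inv7
  simp only [h, ← map_mul, ← map_pow, hn]

theorem inv7_inj : Function.Injective fun i : Fin 19 => inv7 (rep i) := by
  have : ∀ i j : Fin 19, inv7 (rep i) = inv7 (rep j) → i = j := by decide +kernel
  exact fun i j h => this i j h

/-! ### Normal form -/

theorem trans_cross (p : Perm (Fin 16) × Perm (Fin 16)) (hp : IsType248Genus2Pair p)
    (π : Perm (Fin 16)) (hπ : π * (p.2 * p.1) * π⁻¹ = phiP) :
    ∃ x : Fin 16, x.val < 8 ∧ ¬ ((π * p.1 * π⁻¹) x).val < 8 := by
  by_contra hcon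
  push Not at hcon
  have hsq : p.1 * p.1 = 1 := by rw [← sq]; exact ((cyc2 _).1 hp.2.1).1
  have h1 : ∀ x, (π x).val < 8 ↔ (π (p.1 x)).val < 8 := by
    have aux : ∀ x, (π x).val < 8 → (π (p.1 x)).val < 8 := by
      intro x hx
      simpa using hcon (π x) hx
    intro x
    refine ⟨aux x, fun h => ?_⟩
    have := aux _ h
    have hxx : p.1 (p.1 x) = x := by rw [← mul_apply, hsq]; rfl
    rwa [hxx] at this
  have hphi : ∀ x : Fin 16, x.val < 8 ↔ (phiP x).val < 8 := by decide +kernel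
  have h2 : ∀ x, (π x).val < 8 ↔ (π (p.2 x)).val < 8 := by
    intro x
    rw [h1 x, hphi, ← hπ]
    have : p.1 (p.1 x) = x := by rw [← mul_apply, hsq]; rfl
    simp [this]
  have hall : ∀ g ∈ Subgroup.closure ({p.1, p.2} : Set (Perm (Fin 16))),
      ∀ x, (π x).val < 8 ↔ (π (g x)).val < 8 := by
    intro g hg
    induction hg using Subgroup.closure_induction with
    | mem g hg =>
      rcases hg with rfl | hg
      · exact h1
      · rw [Set.mem_singleton_iff.1 hg]; exact h2
    | one => intro x; rfl
    | mul a b _ _ ha hb => intro x; rw [mul_apply, ← ha, ← hb]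
    | inv a _ ha => intro x; rw [ha (a⁻¹ x)]; simp
  obtain ⟨g, hg, hgx⟩ := hp.1 (π⁻¹ 0) (π⁻¹ 8)
  have := hall g hg (π⁻¹ 0)
  rw [hgx] at this
  simp at this

theorem cen_exists : ∀ x y : Fin 16, x.val < 8 → ¬ y.val < 8 →
    ∃ a b : Fin 8, cenN false a b x = 0 ∧ cenN false a b y = 8 := by
  decide +kernel

theorem normal_form (s : Perm (Fin 16)) (h1 : s ^ 2 = 1) (h2 : ∀ x, s x ≠ x) (h0 : s 0 = 8)
    (h3 : (phiP * s) ^ 4 = 1) (h4 : ∀ x, ((phiP * s) ^ 2) x ≠ x) :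
    ∃ (c : Perm (Fin 16)) (i : Fin 19), c * phiP * c⁻¹ = phiP ∧ c * s * c⁻¹ = repP i := by
  obtain ⟨f, hf⟩ : ∃ f : ℕ → ℕ, f = fun z => (s (Fin.ofNat 16 z)).val := ⟨_, rfl⟩
  have hfx : ∀ x : Fin 16, f x.val = (s x).val := by
    intro x
    simp only [hf]
    congr 2
    exact Fin.ext (Nat.mod_eq_of_lt x.2)
  have hpx : ∀ x : Fin 16, phi (f x.val) = ((phiP * s) x).val := by
    intro x
    rw [hfx, mul_apply, phiP_val]
  have hval : Valid f := by
    intro z hz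
    obtain ⟨x, rfl⟩ : ∃ x : Fin 16, x.val = z := ⟨⟨z, hz⟩, rfl⟩
    refine ⟨?_, ?_, ?_, ?_, ?_⟩
    · rw [hfx]; exact (s x).2
    · rw [hfx, hfx, ← mul_apply, ← sq, h1]; rfl
    · rw [hfx]; exact fun e => h2 x (Fin.ext e)
    · rw [hpx, hpx, ← mul_apply, ← sq]; exact fun e => h4 x (Fin.ext e)
    · rw [hpx, hpx, hpx, hpx, ← mul_apply, ← mul_apply, ← mul_apply]
      have : (phiP * s) * (phiP * s) * (phiP * s) * (phiP * s) = 1 := by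
        rw [← h3]; simp only [pow_succ, pow_zero, one_mul]
      rw [this]; rfl
  have h8 : f 0 = 8 := by
    have := hfx 0
    rw [h0] at this
    exact this
  obtain ⟨sw, a, ha, b, hb, r, hr, hz⟩ := valid_good hval h8
  obtain ⟨n, hn, rfl⟩ := List.mem_iff_getElem.1 hr
  refine ⟨cenP sw ⟨a, ha⟩ ⟨b, hb⟩, ⟨n, hn⟩, ?_, ?_⟩
  · rw [cenP_comm, mul_inv_cancel_right]
  · rw [mul_inv_eq_iff_eq_mul]
    ext x
    rw [mul_apply, mul_apply, cenP_val]
    have := hz x.val x.2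
    rw [hfx] at this
    rw [this]
    change _ = digit (repNums.getD n 0) (cenN sw a b x) % 16
    rw [List.getD_eq_getElem _ _ hn]
    unfold digit
    rw [Nat.mod_mod]

theorem exists_rep (p : Perm (Fin 16) × Perm (Fin 16)) (hp : IsType248Genus2Pair p) :
    ∃ (π : Perm (Fin 16)) (i : Fin 19),
      p.1 = π * (rep i).1 * π⁻¹ ∧ p.2 = π * (rep i).2 * π⁻¹ := by
  obtain ⟨π, hπ⟩ := isConj_iff.1
    (isConj_iff_cycleType_eq.2 (hp.2.2.2.trans phiP_cyc.symm))
  obtain ⟨x, hx, hy⟩ := trans_cross p hp π hπ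
  obtain ⟨a, b, hax, hby⟩ := cen_exists x _ hx hy
  set d := cenP false a b with hd
  have hdphi : d * phiP * d⁻¹ = phiP := by rw [cenP_comm, mul_inv_cancel_right]
  set e := d * π with he
  have heφ : e * (p.2 * p.1) * e⁻¹ = phiP := by
    rw [← hdphi, ← hπ, he]; group
  set s := e * p.1 * e⁻¹ with hs
  obtain ⟨a1, a2⟩ := (cyc2 _).1 (show s.cycleType = Multiset.replicate 8 2 by
    rw [hs, cycleType_conj]; exact hp.2.1)
  have hsq : p.1 * p.1 = 1 := by rw [← sq]; exact ((cyc2 _).1 hp.2.1).1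
  have hps : phiP * s = e * p.2 * e⁻¹ := by
    rw [← heφ, hs]
    calc _ = e * (p.2 * (p.1 * p.1)) * e⁻¹ := by group
      _ = _ := by rw [hsq, mul_one]
  obtain ⟨a3, a4⟩ := (cyc4 _).1 (show (phiP * s).cycleType = Multiset.replicate 4 4 by
    rw [hps, cycleType_conj]; exact hp.2.2.1)
  have hdx : d x = 0 := Fin.ext hax
  have hdy : d ((π * p.1 * π⁻¹) x) = 8 := Fin.ext hby
  have a0 : s 0 = 8 := by
    rw [← hdx, ← hdy, hs, he]
    simp
  obtain ⟨c, i, hc1, hc2⟩ := normal_form s a1 a2 a0 a3 a4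
  refine ⟨(c * e)⁻¹, i, ?_, ?_⟩
  · change _ = _ * repP i * _
    rw [← hc2, hs]; group
  · change _ = _ * (phiP * repP i) * _
    have : phiP * repP i = c * (e * p.2 * e⁻¹) * c⁻¹ := by
      rw [← hps, ← hc2]
      nth_rewrite 1 [← hc1]
      group
    rw [this]; group

/-- Indices of the four curves. -/
def curveIdx : Fin 4 → Fin 19 := ![7, 8, 10, 16]

theorem curveIdx_inj : Function.Injective curveIdx := by decide

theorem curve_cyc (i : Fin 19) :
    ((rep i).2 ^ 2 * (rep i).1).cycleType = {8, 8} ↔ ∃ j, curveIdx j = i := by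
  rw [cyc8, Perm.ext_iff]
  revert i
  decide +kernel

theorem quot_inj {α β ι : Type} (r : α → α → Prop) (F : α → β) (h : ∀ p q, r p q → F p = F q)
    (g : ι → α) (hg : Function.Injective fun i => F (g i)) :
    Function.Injective fun i => Quot.mk r (g i) :=
  fun _ _ hij => hg (congrArg (Quot.lift F h) hij)

end D248

/-- Up to equivalence there are exactly 19 uniform multicurves of genus 2 and
type (2,4,8), of which exactly 4 are proper filling curves. -/
theorem card_uniform_multicurves_type_248_genus_two :
    Nat.card (Quot SimConj248) = 19 ∧ Nat.card (Quot SimConj248Curve) = 4 := by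
  constructor
  · have hb : Function.Bijective
        (fun i : Fin 19 => Quot.mk SimConj248 ⟨D248.rep i, D248.rep_isPair i⟩) := by
      constructor
      · intro i j hij
        have hlift : ∀ p q : {p // IsType248Genus2Pair p}, SimConj248 p q →
            D248.inv7 p.1 = D248.inv7 q.1 := by
          rintro p q ⟨π, h1, h2⟩
          rw [← D248.inv7_conj p.1 π, ← h1, ← h2]
        exact D248.quot_inj SimConj248 (fun p => D248.inv7 p.1) hlift
          (fun i => ⟨D248.rep i, D248.rep_isPair i⟩) D248.inv7_inj hij
      · intro q
        induction q using Quot.ind with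
        | mk p =>
          obtain ⟨π, i, h1, h2⟩ := D248.exists_rep p.1 p.2
          exact ⟨i, Quot.sound ⟨π, h1, h2⟩⟩
    rw [← Nat.card_eq_of_bijective _ hb, Nat.card_eq_fintype_card, Fintype.card_fin]
  · have hb : Function.Bijective
        (fun j : Fin 4 => Quot.mk SimConj248Curve ⟨D248.rep (D248.curveIdx j),
          D248.rep_isPair _, (D248.curve_cyc _).2 ⟨j, rfl⟩⟩) := by
      constructor
      · intro i j hij
        have hlift : ∀ p q : {p // IsType248Genus2CurvePair p}, SimConj248Curve p q →
            D248.inv7 p.1 = D248.inv7 q.1 := by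
          rintro p q ⟨π, h1, h2⟩
          rw [← D248.inv7_conj p.1 π, ← h1, ← h2]
        exact D248.quot_inj SimConj248Curve (fun p => D248.inv7 p.1) hlift
          (fun j => ⟨D248.rep (D248.curveIdx j),
            D248.rep_isPair _, (D248.curve_cyc _).2 ⟨j, rfl⟩⟩)
          (D248.inv7_inj.comp D248.curveIdx_inj) hij
      · intro q
        induction q using Quot.ind with
        | mk p =>
          obtain ⟨π, i, h1, h2⟩ := D248.exists_rep p.1 p.2.1
          have hc : ((D248.rep i).2 ^ 2 * (D248.rep i).1).cycleType = {8, 8} := by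
            rw [← p.2.2, h1, h2, ← Equiv.Perm.cycleType_conj (τ := π)]
            congr 1
            rw [sq, sq]
            group
          obtain ⟨j, rfl⟩ := (D248.curve_cyc i).1 hc
          exact ⟨j, Quot.sound ⟨π, h1, h2⟩⟩
    rw [← Nat.card_eq_of_bijective _ hb, Nat.card_eq_fintype_card, Fintype.card_fin]
end

section
/- Let E ≥ 1 be a natural number and let σ₀, σ₁ be permutations of ℕ whose supports are contained in {1, …, E}. Let a, b ∈ {1, …, E} with a ≠ b, σ₀ a = b and σ₀ b = a (so (a,b) is a 2-cycle of σ₀). Define σ̃₀ = σ₀ · (a b) · (a, E+5) · (E+1, E+6) · (E+2, E+7) · (E+3, E+8) · (E+4, b) (a product of the indicated pairwise disjoint transpositions with σ₀·swap a b), and σ̃₁ = σ₁ · c₁ · c₂ where c₁ is the 4-cycle (E+5, E+1, E+3, E+7) and c₂ is the 4-cycle (E+4, E+2, E+6, E+8). Then σ̃₁σ̃₀ is conjugate in Perm ℕ to the permutation σ₁ σ₀ γ₇ γ₃, where γ₇ is the 7-cycle (a, E+5, E+6, E+3, E+2, E+1, E+8), γ₃ is the 3-cycle (b, E+4, E+7),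 and products of permutations are composed applying the rightmost factor first. -/
/-- The surgered permutation
`σ̃₀ = σ₀ · (a b) · (a, E+5) · (E+1, E+6) · (E+2, E+7) · (E+3, E+8) · (E+4, b)`. -/
def surgeredSigma0 (σ₀ : Equiv.Perm ℕ) (E a b : ℕ) : Equiv.Perm ℕ :=
  σ₀ * Equiv.swap a b * Equiv.swap a (E + 5) * Equiv.swap (E + 1) (E + 6) *
    Equiv.swap (E + 2) (E + 7) * Equiv.swap (E + 3) (E + 8) *
    Equiv.swap (E + 4) b

/-- The surgered permutation
`σ̃₁ = σ₁ · (E+5, E+1, E+3, E+7) · (E+4, E+2, E+6, E+8)`. -/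
def surgeredSigma1 (σ₁ : Equiv.Perm ℕ) (E : ℕ) : Equiv.Perm ℕ :=
  σ₁ * [E + 5, E + 1, E + 3, E + 7].formPerm * [E + 4, E + 2, E + 6, E + 8].formPerm

/-- A list cycle supported above `E` commutes with a permutation supported in `{1, …, E}`. -/
theorem commute_formPerm_of_gt (E : ℕ) (σ : Equiv.Perm ℕ)
    (hs : ∀ x : ℕ, σ x ≠ x → x ∈ Finset.Icc 1 E) (l : List ℕ) (hl : ∀ x ∈ l, E < x) :
    Commute l.formPerm σ := by
  apply Equiv.Perm.Disjoint.commute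
  intro x
  by_cases hx : x ∈ l
  · right
    by_contra h
    have h1 := hs x h
    have h2 := hl x hx
    simp only [Finset.mem_Icc] at h1
    omega
  · left
    exact List.formPerm_apply_of_notMem hx

/-- The explicit relabelling that carries the local product to `γ₇ γ₃`. -/
theorem local_identity (E a b : ℕ) (ha : a ≤ E) (hb : b ≤ E) (hab : a ≠ b) :
    ([E + 1, E + 5, E + 7, E + 3].formPerm * [E + 8, E + 6, E + 2, E + 4].formPerm) *
      ([E + 5, E + 1, E + 3, E + 7].formPerm * [E + 4, E + 2, E + 6, E + 8].formPerm *
      (Equiv.swap a b * Equiv.swap a (E + 5) * Equiv.swap (E + 1) (E + 6) *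
        Equiv.swap (E + 2) (E + 7) * Equiv.swap (E + 3) (E + 8) * Equiv.swap (E + 4) b)) =
    ([a, E + 5, E + 6, E + 3, E + 2, E + 1, E + 8].formPerm * [b, E + 4, E + 7].formPerm) *
      ([E + 1, E + 5, E + 7, E + 3].formPerm * [E + 8, E + 6, E + 2, E + 4].formPerm) := by
  have hA : ∀ k, 0 < k → a ≠ E + k := by intros; omega
  have hB : ∀ k, 0 < k → b ≠ E + k := by intros; omega
  have hA' : ∀ k, 0 < k → E + k ≠ a := by intros; omega
  have hB' : ∀ k, 0 < k → E + k ≠ b := by intros; omega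
  have hba := hab.symm
  ext x
  simp only [List.formPerm_cons_cons, List.formPerm_singleton, mul_one, Equiv.Perm.mul_apply]
  by_cases h : x = a ∨ x = b ∨ x = E + 1 ∨ x = E + 2 ∨ x = E + 3 ∨ x = E + 4 ∨ x = E + 5 ∨
      x = E + 6 ∨ x = E + 7 ∨ x = E + 8
  · rcases h with h | h | h | h | h | h | h | h | h | h <;> subst h <;>
      simp [Equiv.swap_apply_def, hA, hB, hA', hB', hab, hba]
  · push Not at h
    obtain ⟨h1, h2, h3, h4, h5, h6, h7, h8, h9, h10⟩ := h
    simp [Equiv.swap_apply_of_ne_of_ne, *]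

/-- Equation (3) of the paper: the surgered product σ̃₁σ̃₀ is conjugate in
Perm ℕ to σ₁σ₀ · (a, E+5, E+6, E+3, E+2, E+1, E+8) · (b, E+4, E+7). -/
theorem surgery_product_isConj
    (E : ℕ) (hE : 1 ≤ E) (σ₀ σ₁ : Equiv.Perm ℕ)
    (hs0 : ∀ x : ℕ, σ₀ x ≠ x → x ∈ Finset.Icc 1 E)
    (hs1 : ∀ x : ℕ, σ₁ x ≠ x → x ∈ Finset.Icc 1 E)
    (a b : ℕ) (ha : a ∈ Finset.Icc 1 E) (hb : b ∈ Finset.Icc 1 E)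
    (hab : a ≠ b) (hσa : σ₀ a = b) (hσb : σ₀ b = a) :
    IsConj (surgeredSigma1 σ₁ E * surgeredSigma0 σ₀ E a b)
      (σ₁ * σ₀ * [a, E + 5, E + 6, E + 3, E + 2, E + 1, E + 8].formPerm *
        [b, E + 4, E + 7].formPerm) := by
  simp only [Finset.mem_Icc] at ha hb
  have key := local_identity E a b ha.2 hb.2 hab
  have com : ∀ l : List ℕ, (∀ x ∈ l, E < x) → Commute l.formPerm σ₀ ∧ Commute l.formPerm σ₁ :=
    fun l hl => ⟨commute_formPerm_of_gt E σ₀ hs0 l hl, commute_formPerm_of_gt E σ₁ hs1 l hl⟩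
  have p1 := com [E + 1, E + 5, E + 7, E + 3] (by simp)
  have p2 := com [E + 8, E + 6, E + 2, E + 4] (by simp)
  have c1 := com [E + 5, E + 1, E + 3, E + 7] (by simp)
  have c2 := com [E + 4, E + 2, E + 6, E + 8] (by simp)
  have hc := (c1.1.mul_left c2.1).eq
  have hp := ((p1.2.mul_left p2.2).mul_right (p1.1.mul_left p2.1)).eq
  rw [isConj_iff]
  refine ⟨[E + 1, E + 5, E + 7, E + 3].formPerm * [E + 8, E + 6, E + 2, E + 4].formPerm, ?_⟩
  rw [mul_inv_eq_iff_eq_mul]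
  unfold surgeredSigma1 surgeredSigma0
  generalize [E + 1, E + 5, E + 7, E + 3].formPerm * [E + 8, E + 6, E + 2, E + 4].formPerm = π
    at *
  rw [mul_assoc (σ₁ * σ₀), mul_assoc (σ₁ * σ₀), ← key, ← mul_assoc (σ₁ * σ₀), ← hp]
  rw [mul_assoc σ₁]
  generalize [E + 5, E + 1, E + 3, E + 7].formPerm * [E + 4, E + 2, E + 6, E + 8].formPerm = c
    at *
  simp only [mul_assoc]
  rw [← mul_assoc c σ₀, hc]
  simp only [mul_assoc]
end

section
/- In the setting of the surgery: let E ≥ 1, let σ₀, σ₁ be permutations of ℕ with supports contained in {1, …, E}, let a ≠ b in {1, …, E} with σ₀ a = b and σ₀ b = a, and define σ̃₀ = σ₀ · (a b) · (a, E+5) · (E+1, E+6) · (E+2, E+7) · (E+3, E+8) · (E+4, b) and σ̃₁ = σ₁ · (E+5, E+1, E+3, E+7) · (E+4, E+2, E+6, E+8). If the subgroup generated by σ₀ and σ₁ acts transitively on {1, …, E}, then the subgroup generated by σ̃₀ and σ̃₁ acts transitively on {1, …, E+8}. -/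
lemma surgery_new_points (E x : ℕ) (h1 : E < x) (h2 : x ≤ E + 8) :
    x = E + 1 ∨ x = E + 2 ∨ x = E + 3 ∨ x = E + 4 ∨ x = E + 5 ∨ x = E + 6 ∨
      x = E + 7 ∨ x = E + 8 := by
  obtain ⟨k, rfl⟩ := Nat.exists_eq_add_of_lt h1
  have hk : k < 8 := by omega
  interval_cases k <;> simp

set_option linter.unusedSimpArgs false in
set_option maxHeartbeats 2000000 in
/-- If the subgroup generated by σ₀ and σ₁ acts transitively on {1,…,E}, then
the subgroup generated by the surgered pair σ̃₀, σ̃₁ acts transitively on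
{1,…,E+8}: the surgered dessin is again connected. -/
theorem surgery_preserves_transitivity
    (E : ℕ) (hE : 1 ≤ E) (σ₀ σ₁ : Equiv.Perm ℕ)
    (hs0 : ∀ x : ℕ, σ₀ x ≠ x → x ∈ Finset.Icc 1 E)
    (hs1 : ∀ x : ℕ, σ₁ x ≠ x → x ∈ Finset.Icc 1 E)
    (a b : ℕ) (ha : a ∈ Finset.Icc 1 E) (hb : b ∈ Finset.Icc 1 E)
    (hab : a ≠ b) (hσa : σ₀ a = b) (hσb : σ₀ b = a)
    (htrans : ∀ x ∈ Finset.Icc 1 E, ∀ y ∈ Finset.Icc 1 E,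
      ∃ π ∈ Subgroup.closure ({σ₀, σ₁} : Set (Equiv.Perm ℕ)), π x = y) :
    ∀ x ∈ Finset.Icc 1 (E + 8), ∀ y ∈ Finset.Icc 1 (E + 8),
      ∃ π ∈ Subgroup.closure
        ({surgeredSigma0 σ₀ E a b, surgeredSigma1 σ₁ E} : Set (Equiv.Perm ℕ)),
        π x = y := by
  
  simp only [Finset.mem_Icc] at *
  have f0 : ∀ x, E < x → σ₀ x = x := fun x hx => by
    by_contra h
    have := hs0 x h
    omega
  have f1 : ∀ x, E < x → σ₁ x = x := fun x hx => by
    by_contra h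
    have := hs1 x h
    omega
  set τ₀ := surgeredSigma0 σ₀ E a b with hτ₀
  set τ₁ := surgeredSigma1 σ₁ E with hτ₁
  obtain ⟨R, hR⟩ : ∃ R : ℕ → ℕ → Prop, ∀ x y, R x y ↔
    ∃ π ∈ Subgroup.closure ({τ₀, τ₁} : Set (Equiv.Perm ℕ)), π x = y := ⟨_, fun _ _ => Iff.rfl⟩
  have rrefl : ∀ x, R x x := fun x => (hR _ _).2 ⟨1, one_mem _, rfl⟩
  have rsymm : ∀ {x y}, R x y → R y x := by
    intro x y h
    obtain ⟨π, hπ, rfl⟩ := (hR _ _).1 h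
    exact (hR _ _).2 ⟨π⁻¹, inv_mem hπ, by simp⟩
  have rtrans : ∀ {x y z}, R x y → R y z → R x z := by
    intro x y z h h'
    obtain ⟨π, hπ, rfl⟩ := (hR _ _).1 h
    obtain ⟨ρ, hρ, rfl⟩ := (hR _ _).1 h'
    exact (hR _ _).2 ⟨ρ * π, mul_mem hρ hπ, rfl⟩
  have r0 : ∀ x y, τ₀ x = y → R x y := fun x y h =>
    (hR _ _).2 ⟨τ₀, Subgroup.subset_closure (by simp), h⟩
  have r1 : ∀ x y, τ₁ x = y → R x y := fun x y h =>
    (hR _ _).2 ⟨τ₁, Subgroup.subset_closure (by simp), h⟩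
  -- values of the surgered permutations
  obtain ⟨ha1, ha2⟩ := ha
  obtain ⟨hb1, hb2⟩ := hb
  have e0 : ∀ x, x ≤ E → x ≠ a → x ≠ b → τ₀ x = σ₀ x := fun x hx hxa hxb => by
    simp (disch := omega) only [hτ₀, surgeredSigma0, List.formPerm_cons_cons,
      List.formPerm_singleton, mul_one, Equiv.Perm.mul_apply, Equiv.swap_apply_left,
      Equiv.swap_apply_right, Equiv.swap_apply_of_ne_of_ne, f0]
  have e1 : ∀ x, x ≤ E → τ₁ x = σ₁ x := fun x hx => by
    simp (disch := omega) only [hτ₁, surgeredSigma1, List.formPerm_cons_cons,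
      List.formPerm_singleton, mul_one, Equiv.Perm.mul_apply, Equiv.swap_apply_left,
      Equiv.swap_apply_right, Equiv.swap_apply_of_ne_of_ne, f1]
  have a5 : R a (E + 5) := r0 _ _ <| by
    simp (disch := omega) only [hτ₀, surgeredSigma0, List.formPerm_cons_cons,
      List.formPerm_singleton, mul_one, Equiv.Perm.mul_apply, Equiv.swap_apply_left,
      Equiv.swap_apply_right, Equiv.swap_apply_of_ne_of_ne, f0]
  have b4 : R b (E + 4) := r0 _ _ <| by
    simp (disch := omega) only [hτ₀, surgeredSigma0, List.formPerm_cons_cons,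
      List.formPerm_singleton, mul_one, Equiv.Perm.mul_apply, Equiv.swap_apply_left,
      Equiv.swap_apply_right, Equiv.swap_apply_of_ne_of_ne, f0]
  have h16 : R (E + 1) (E + 6) := r0 _ _ <| by
    simp (disch := omega) only [hτ₀, surgeredSigma0, List.formPerm_cons_cons,
      List.formPerm_singleton, mul_one, Equiv.Perm.mul_apply, Equiv.swap_apply_left,
      Equiv.swap_apply_right, Equiv.swap_apply_of_ne_of_ne, f0]
  have h51 : R (E + 5) (E + 1) := r1 _ _ <| by
    simp (disch := omega) only [hτ₁, surgeredSigma1, List.formPerm_cons_cons,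
      List.formPerm_singleton, mul_one, Equiv.Perm.mul_apply, Equiv.swap_apply_left,
      Equiv.swap_apply_right, Equiv.swap_apply_of_ne_of_ne, f1]
  have h13 : R (E + 1) (E + 3) := r1 _ _ <| by
    simp (disch := omega) only [hτ₁, surgeredSigma1, List.formPerm_cons_cons,
      List.formPerm_singleton, mul_one, Equiv.Perm.mul_apply, Equiv.swap_apply_left,
      Equiv.swap_apply_right, Equiv.swap_apply_of_ne_of_ne, f1]
  have h37 : R (E + 3) (E + 7) := r1 _ _ <| by
    simp (disch := omega) only [hτ₁, surgeredSigma1, List.formPerm_cons_cons,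
      List.formPerm_singleton, mul_one, Equiv.Perm.mul_apply, Equiv.swap_apply_left,
      Equiv.swap_apply_right, Equiv.swap_apply_of_ne_of_ne, f1]
  have h42 : R (E + 4) (E + 2) := r1 _ _ <| by
    simp (disch := omega) only [hτ₁, surgeredSigma1, List.formPerm_cons_cons,
      List.formPerm_singleton, mul_one, Equiv.Perm.mul_apply, Equiv.swap_apply_left,
      Equiv.swap_apply_right, Equiv.swap_apply_of_ne_of_ne, f1]
  have h26 : R (E + 2) (E + 6) := r1 _ _ <| by
    simp (disch := omega) only [hτ₁, surgeredSigma1, List.formPerm_cons_cons,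
      List.formPerm_singleton, mul_one, Equiv.Perm.mul_apply, Equiv.swap_apply_left,
      Equiv.swap_apply_right, Equiv.swap_apply_of_ne_of_ne, f1]
  have h68 : R (E + 6) (E + 8) := r1 _ _ <| by
    simp (disch := omega) only [hτ₁, surgeredSigma1, List.formPerm_cons_cons,
      List.formPerm_singleton, mul_one, Equiv.Perm.mul_apply, Equiv.swap_apply_left,
      Equiv.swap_apply_right, Equiv.swap_apply_of_ne_of_ne, f1]
  have a1 : R a (E + 1) := rtrans a5 h51
  have a3 := rtrans a1 h13
  have a7 := rtrans a3 h37
  have a6 := rtrans a1 h16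
  have a8 := rtrans a6 h68
  have a2 := rtrans a6 (rsymm h26)
  have a4 := rtrans a2 (rsymm h42)
  have ab : R a b := rtrans a4 (rsymm b4)
  have s0 : ∀ x, R x (σ₀ x) := by
    intro x
    by_cases hx : E < x
    · rw [f0 x hx]
      exact rrefl x
    by_cases hxa : x = a
    · rw [hxa, hσa]
      exact ab
    by_cases hxb : x = b
    · rw [hxb, hσb]
      exact rsymm ab
    exact r0 _ _ (e0 x (by omega) hxa hxb)
  have s1 : ∀ x, R x (σ₁ x) := by
    intro x
    by_cases hx : E < x
    · rw [f1 x hx]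
      exact rrefl x
    exact r1 _ _ (e1 x (by omega))
  have key : ∀ π ∈ Subgroup.closure ({σ₀, σ₁} : Set (Equiv.Perm ℕ)), ∀ x, R x (π x) := by
    intro π hπ
    induction hπ using Subgroup.closure_induction with
    | mem π h =>
      rcases h with rfl | h
      · exact s0
      · rw [Set.mem_singleton_iff.1 h]
        exact s1
    | one => exact rrefl
    | mul π ρ _ _ h1 h2 => exact fun x => rtrans (h2 x) (h1 (ρ x))
    | inv π _ h =>
      intro x
      have hx := h (π⁻¹ x)
      have e : π (π⁻¹ x) = x := by simp
      rw [e] at hx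
      exact rsymm hx
  have all : ∀ x, 1 ≤ x ∧ x ≤ E + 8 → R a x := by
    intro x hx
    by_cases hxE : x ≤ E
    · obtain ⟨π, hπ, rfl⟩ := htrans a ⟨ha1, ha2⟩ x ⟨hx.1, hxE⟩
      exact key π hπ a
    · have : x = E + 1 ∨ x = E + 2 ∨ x = E + 3 ∨ x = E + 4 ∨ x = E + 5 ∨ x = E + 6 ∨
        x = E + 7 ∨ x = E + 8 := surgery_new_points E x (by omega) hx.2
      rcases this with rfl | rfl | rfl | rfl | rfl | rfl | rfl | rfl
      · exact a1
      · exact a2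
      · exact a3
      · exact a4
      · exact a5
      · exact a6
      · exact a7
      · exact a8
  exact fun x hx y hy => (hR _ _).1 (rtrans (rsymm (all x hx)) (all y hy))
end
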